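/- The series ∑_{n=0}^∞ ((1/2)_n^3 (1/3)_n (2/3)_n / (1)_n^5) · (27/64)^n · (74n² + 27n + 3) converges and equals 48/π². -/

import Mathlib

noncomputable def poch (x : ℝ) (n : ℕ) : ℝ := ∏ i ∈ Finset.range n, (x + i)

/-!
The proof is by the Wilf–Zeilberger method. There are explicit functions `F` and `G` with
`F (n + 1) k - F n k = G n (k + 1) - G n k`, with `F 0 k = 0`, and such that `G n 0` is the `n`-th
term of the series. Summing over `n`, the left-hand side telescopes to `0`, so `∑ₙ G n k` does not
depend on `k`. As `k → ∞` every `G n k` with `n ≥ 1` tends to `0`, while `G 0 k` tends to `48 / π²`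
by the Wallis product; a geometric majorant in `n`, uniform in `k`, allows the limit to be taken
inside the sum.
-/

open Filter Topology
open scoped Nat

section WilfZeilberger

theorem tsum_eq_tsum_of_sub_eq_sub {E : Type*} [AddCommGroup E] [TopologicalSpace E]
    [IsTopologicalAddGroup E] [T2Space E] {f a b : ℕ → E}
    (hf : ∀ n, f (n + 1) - f n = b n - a n)
    (hf_lim : Tendsto f atTop (𝓝 (f 0))) (ha : Summable a) (hb : Summable b) :
    ∑' n, b n = ∑' n, a n := by
  have partial_sums : Tendsto (fun N ↦ ∑ n ∈ Finset.range N, (b n - a n)) atTop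
      (𝓝 (∑' n, b n - ∑' n, a n)) := (hb.hasSum.sub ha.hasSum).tendsto_sum_nat
  have telescope (N : ℕ) : ∑ n ∈ Finset.range N, (b n - a n) = f N - f 0 := by
    simp_rw [← hf, Finset.sum_range_sub]
  simp_rw [telescope] at partial_sums
  rw [← sub_eq_zero, tendsto_nhds_unique partial_sums (hf_lim.sub_const (f 0)), sub_self]

theorem hasSum_of_wz_pair {E : Type*} [NormedAddCommGroup E] [CompleteSpace E]
    {F G : ℕ → ℕ → E} {g : ℕ → E} {bound : ℕ → ℝ}
    (hFG : ∀ n k, F (n + 1) k - F n k = G n (k + 1) - G n k)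
    (hF_lim : ∀ k, Tendsto (fun n ↦ F n k) atTop (𝓝 (F 0 k)))
    (hbound : Summable bound) (hG_le : ∀ n k, ‖G n k‖ ≤ bound n)
    (hG_lim : ∀ n, Tendsto (G n) atTop (𝓝 (g n))) :
    HasSum (fun n ↦ G n 0) (∑' n, g n) := by
  have summable_G (k : ℕ) : Summable fun n ↦ G n k :=
    .of_norm_bounded hbound fun n ↦ hG_le n k
  have tsum_G (k : ℕ) : ∑' n, G n k = ∑' n, G n 0 := by
    induction k with
    | zero => rfl
    | succ k ih =>
      rw [← ih]
      exact tsum_eq_tsum_of_sub_eq_sub (fun n ↦ hFG n k) (hF_lim k) (summable_G k)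
        (summable_G (k + 1))
  have tsum_lim : Tendsto (fun k ↦ ∑' n, G n k) atTop (𝓝 (∑' n, g n)) :=
    tendsto_tsum_of_dominated_convergence hbound hG_lim (.of_forall fun k n ↦ hG_le n k)
  simp_rw [tsum_G] at tsum_lim
  rw [tendsto_nhds_unique tsum_lim tendsto_const_nhds]
  exact (summable_G 0).hasSum

end WilfZeilberger

section Pochhammer

theorem poch_zero (x : ℝ) : poch x 0 = 1 := Finset.prod_range_zero _

theorem poch_succ (x : ℝ) (n : ℕ) : poch x (n + 1) = poch x n * (x + n) :=
  Finset.prod_range_succ _ n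

theorem poch_pos {x : ℝ} (hx : 0 < x) (n : ℕ) : 0 < poch x n :=
  Finset.prod_pos fun _ _ ↦ by positivity

theorem poch_one (n : ℕ) : poch 1 n = n ! := by
  simp [poch, ← Finset.prod_range_add_one_eq_factorial, add_comm]

theorem poch_mul_mul (m : ℕ) (x : ℝ) (n : ℕ) :
    poch (m * x) (m * n) = (m : ℝ) ^ (m * n) * ∏ j ∈ Finset.range m, poch (x + j / m) n := by
  induction n with
  | zero => simp [poch_zero]
  | succ n ih =>
    have last_block : ∏ j ∈ Finset.range m, ((m : ℝ) * x + (m * n + j : ℕ)) =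
        (m : ℝ) ^ m * ∏ j ∈ Finset.range m, (x + j / m + n) := by
      rw [← Finset.card_range m, ← Finset.prod_const, Finset.card_range,
        ← Finset.prod_mul_distrib]
      refine Finset.prod_congr rfl fun j hj ↦ ?_
      have hm : m ≠ 0 := Nat.ne_zero_of_lt (Finset.mem_range.mp hj)
      push_cast
      field_simp
      ring
    rw [poch, Nat.mul_succ, Finset.prod_range_add, last_block, ← poch, ih]
    simp only [poch_succ, Finset.prod_mul_distrib, pow_add]
    ring

theorem factorial_two_mul (n : ℕ) : ((2 * n)! : ℝ) = 4 ^ n * poch (1 / 2) n * n ! := by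
  have h := poch_mul_mul 2 (1 / 2) n
  norm_num [Finset.prod_range_succ, poch_one, pow_mul] at h
  rw [h, mul_assoc]

theorem factorial_three_mul (n : ℕ) :
    ((3 * n)! : ℝ) = 27 ^ n * poch (1 / 3) n * poch (2 / 3) n * n ! := by
  have h := poch_mul_mul 3 (1 / 3) n
  norm_num [Finset.prod_range_succ, poch_one, pow_mul] at h
  rw [h]
  ring

end Pochhammer

namespace Guillera

/-- The hypergeometric term common to both members of the Wilf–Zeilberger pair. At `k = 0` it is the
hypergeometric part of the series. -/
noncomputable def kernel (n k : ℕ) : ℝ :=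
  poch (1 / 2) n ^ 2 * poch (1 / 2) (n + k) ^ 3 * (3 * n + 2 * k)! /
    (n ! * (n + k)! ^ 3 * (2 * n + k)! ^ 2 * 4 ^ (n + k))

/-- The part of the Wilf–Zeilberger pair with denominator `3n + 2k`. At `n = k = 0` the junk value
`0 / 0 = 0` is the right one: it gives `wzF 0 0 = 0`, and `wzG 0 0 = 3`, the
first term of the series. -/
noncomputable def polarPart (n k : ℕ) : ℝ := 12 * n ^ 3 / (3 * n + 2 * k) * kernel n k

/-- The first member of the Wilf–Zeilberger pair, whose differences in `n` are taken. -/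
noncomputable def wzF (n k : ℕ) : ℝ :=
  12 * n * (5 * n + 4 * k + 1) * kernel n k - polarPart n k

/-- The polynomial occurring in the second member of the Wilf–Zeilberger pair. -/
def wzPoly (n k : ℝ) : ℝ :=
  (2 * k + 1) ^ 4 + (13 + 78 * k + 144 * k ^ 2 + 88 * k ^ 3) * n +
    (66 + 240 * k + 204 * k ^ 2) * n ^ 2 + (140 + 232 * k) * n ^ 3 + 104 * n ^ 4

/-- The second member of the Wilf–Zeilberger pair, whose differences in `k` are taken and whose
values at `k = 0` are the terms of the series. -/
noncomputable def wzG (n k : ℕ) : ℝ :=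
  3 * wzPoly n k / (2 * n + k + 1) ^ 2 * kernel n k - polarPart n k

/-- The kernel multiplied by the quadratic growth of the rational factors of `wzF` and `wzG`, so
that it dominates both up to a constant. -/
noncomputable def majorant (n k : ℕ) : ℝ := kernel n k * ((n : ℝ) + k + 1) ^ 2

theorem kernel_pos (n k : ℕ) : 0 < kernel n k := by
  have half_pos (m : ℕ) : 0 < poch (1 / 2) m := poch_pos one_half_pos m
  have := half_pos n
  have := half_pos (n + k)
  unfold kernel
  positivity

theorem kernel_succ_left (n k : ℕ) : kernel (n + 1) k = kernel n k *
    ((n + 1 / 2) ^ 2 * (n + k + 1 / 2) ^ 3 * (3 * n + 2 * k + 1) * (3 * n + 2 * k + 2) *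
      (3 * n + 2 * k + 3) /
        (4 * (n + 1) * (n + k + 1) ^ 3 * (2 * n + k + 1) ^ 2 * (2 * n + k + 2) ^ 2)) := by
  unfold kernel
  rw [show n + 1 + k = n + k + 1 by ring,
    show 3 * (n + 1) + 2 * k = 3 * n + 2 * k + 1 + 1 + 1 by ring,
    show 2 * (n + 1) + k = 2 * n + k + 1 + 1 by ring]
  simp only [Nat.factorial_succ, poch_succ]
  push_cast
  field_simp
  ring

theorem kernel_succ_right (n k : ℕ) : kernel n (k + 1) = kernel n k *
    ((n + k + 1 / 2) ^ 3 * (3 * n + 2 * k + 1) * (3 * n + 2 * k + 2) /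
      (4 * (n + k + 1) ^ 3 * (2 * n + k + 1) ^ 2)) := by
  unfold kernel
  rw [← add_assoc n k 1, show 3 * n + 2 * (k + 1) = 3 * n + 2 * k + 1 + 1 by ring,
    ← add_assoc (2 * n) k 1]
  simp only [Nat.factorial_succ, poch_succ]
  push_cast
  field_simp
  ring

theorem kernel_zero_zero : kernel 0 0 = 1 := by simp [kernel, poch_zero]

theorem kernel_zero_left (k : ℕ) :
    kernel 0 k = 1 / ((2 * k + 1) ^ 2 * Real.Wallis.W k ^ 2) := by
  have := poch_pos one_half_pos k
  have two_pow : (2 : ℝ) ^ (4 * k) = (4 ^ k) ^ 2 := by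
    rw [← pow_mul, mul_comm k, pow_mul, pow_mul]
    norm_num
  simp only [kernel, Real.Wallis.W_eq_factorial_ratio, poch_zero, mul_zero, zero_add,
    factorial_two_mul, two_pow, Nat.factorial_zero, Nat.cast_one]
  field_simp

theorem kernel_zero_right (n : ℕ) : kernel n 0 =
    poch (1 / 2) n ^ 3 * poch (1 / 3) n * poch (2 / 3) n / poch 1 n ^ 5 * (27 / 64) ^ n := by
  have := poch_pos one_half_pos n
  have pow_64 : (64 : ℝ) ^ n = 4 ^ n * (4 ^ n) ^ 2 := by
    rw [← pow_succ', ← pow_mul, mul_comm, pow_mul]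
    norm_num
  simp only [kernel, mul_zero, add_zero, factorial_two_mul, factorial_three_mul, poch_one, div_pow,
    pow_64]
  field_simp

theorem wzF_succ_sub_wzF (n k : ℕ) :
    wzF (n + 1) k - wzF n k = wzG n (k + 1) - wzG n k := by
  -- The factors `3n+2k+3` and `3n+2k+2` of the kernel ratios cancel the two new poles, and
  -- `polarPart n k` occurs on both sides, so no case distinction at `n = k = 0` is needed.
  have polar_left : polarPart (n + 1) k = kernel n k *
      (3 * (n + 1) ^ 2 * (n + 1 / 2) ^ 2 * (n + k + 1 / 2) ^ 3 * (3 * n + 2 * k + 1) *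
        (3 * n + 2 * k + 2) / ((n + k + 1) ^ 3 * (2 * n + k + 1) ^ 2 * (2 * n + k + 2) ^ 2)) := by
    rw [polarPart, kernel_succ_left]
    push_cast
    field_simp
    ring
  have polar_right : polarPart n (k + 1) = kernel n k *
      (3 * n ^ 3 * (n + k + 1 / 2) ^ 3 * (3 * n + 2 * k + 1) /
        ((n + k + 1) ^ 3 * (2 * n + k + 1) ^ 2)) := by
    rw [polarPart, kernel_succ_right]
    push_cast
    field_simp
    ring
  simp only [wzF, wzG, wzPoly, polar_left, polar_right, kernel_succ_left, kernel_succ_right]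
  push_cast
  field_simp
  ring

theorem wzF_zero_left (k : ℕ) : wzF 0 k = 0 := by simp [wzF, polarPart]

theorem wzG_zero_left (k : ℕ) :
    wzG 0 k = 3 * ((2 * k + 1) / (k + 1)) ^ 2 / Real.Wallis.W k ^ 2 := by
  have := Real.Wallis.W_pos k
  simp only [wzG, wzPoly, polarPart, kernel_zero_left, Nat.cast_zero]
  field_simp
  ring

theorem wzG_zero_right (n : ℕ) : wzG n 0 = kernel n 0 * (74 * n ^ 2 + 27 * n + 3) := by
  have polarPart_zero_right : polarPart n 0 = 4 * n ^ 2 * kernel n 0 := by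
    rcases eq_or_ne n 0 with rfl | hn
    · simp [polarPart]
    · simp only [polarPart]
      field_simp
      ring
  simp only [wzG, wzPoly, polarPart_zero_right, Nat.cast_zero]
  field_simp
  ring

theorem majorant_pos (n k : ℕ) : 0 < majorant n k :=
  mul_pos (kernel_pos n k) (by positivity)

theorem majorant_succ_left_le_half (n k : ℕ) : majorant (n + 1) k ≤ majorant n k * (1 / 2) := by
  -- Here and in the later bounds on rational functions, every coefficient of the difference of the
  -- two sides is nonnegative once denominators are cleared.
  rw [majorant, majorant, kernel_succ_left, mul_assoc (kernel n k), mul_assoc (kernel n k)]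
  refine mul_le_mul_of_nonneg_left ?_ (kernel_pos n k).le
  push_cast
  rw [div_mul_eq_mul_div, div_le_iff₀ (by positivity), ← sub_nonneg]
  ring_nf
  positivity

theorem majorant_succ_left_le_div (n k : ℕ) :
    majorant (n + 1) k ≤ majorant n k * (12 * (n + 1) / (k + 1)) := by
  rw [majorant, majorant, kernel_succ_left, mul_assoc (kernel n k), mul_assoc (kernel n k)]
  refine mul_le_mul_of_nonneg_left ?_ (kernel_pos n k).le
  push_cast
  rw [div_mul_eq_mul_div, ← mul_div_assoc, div_le_div_iff₀ (by positivity) (by positivity),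
    ← sub_nonneg]
  ring_nf
  positivity

theorem antitone_majorant_zero_left : Antitone (majorant 0) := by
  refine antitone_nat_of_succ_le fun k ↦ ?_
  rw [majorant, majorant, kernel_succ_right, mul_assoc]
  refine mul_le_mul_of_nonneg_left ?_ (kernel_pos 0 k).le
  push_cast
  rw [div_mul_eq_mul_div, div_le_iff₀ (by positivity), ← sub_nonneg]
  ring_nf
  positivity

theorem majorant_le_half_pow (n k : ℕ) : majorant n k ≤ (1 / 2) ^ n := by
  induction n with
  | zero => simpa [majorant, kernel_zero_zero] using antitone_majorant_zero_left k.zero_le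
  | succ n ih =>
    rw [pow_succ]
    exact (majorant_succ_left_le_half n k).trans (by gcongr)

theorem tendsto_majorant_succ_left (n : ℕ) : Tendsto (majorant (n + 1)) atTop (𝓝 0) := by
  have h : Tendsto (fun k : ℕ ↦ 12 * ((n : ℝ) + 1) * (1 / (k + 1))) atTop (𝓝 0) := by
    simpa using tendsto_one_div_add_atTop_nhds_zero_nat.const_mul (12 * ((n : ℝ) + 1))
  refine squeeze_zero (fun k ↦ (majorant_pos _ k).le) (fun k ↦ ?_) h
  have majorant_le_one : majorant n k ≤ 1 :=
    (majorant_le_half_pow n k).trans (pow_le_one₀ (by norm_num) (by norm_num))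
  calc majorant (n + 1) k
    _ ≤ majorant n k * (12 * (n + 1) / (k + 1)) := majorant_succ_left_le_div n k
    _ ≤ 1 * (12 * (n + 1) / (k + 1)) := by gcongr
    _ = 12 * (n + 1) * (1 / (k + 1)) := by ring

theorem polarPart_nonneg (n k : ℕ) : 0 ≤ polarPart n k :=
  mul_nonneg (by positivity) (kernel_pos n k).le

theorem polarPart_le_majorant (n k : ℕ) : polarPart n k ≤ 4 * majorant n k := by
  have := kernel_pos n k
  have rational_le : 12 * (n : ℝ) ^ 3 / (3 * n + 2 * k) ≤ 4 * (n + k + 1) ^ 2 := by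
    refine div_le_of_le_mul₀ (by positivity) (by positivity) (sub_nonneg.mp ?_)
    ring_nf
    positivity
  calc polarPart n k
    _ ≤ 4 * (n + k + 1) ^ 2 * kernel n k := by unfold polarPart; gcongr
    _ = 4 * majorant n k := by rw [majorant]; ring

theorem abs_mul_kernel_sub_polarPart_le {r C : ℝ} (n k : ℕ) (hr : 0 ≤ r) (hC : 4 ≤ C)
    (hrC : r ≤ C * (n + k + 1) ^ 2) :
    |r * kernel n k - polarPart n k| ≤ C * majorant n k := by
  have := kernel_pos n k
  have := majorant_pos n k
  refine abs_sub_le_of_nonneg_of_le (by positivity) ?_ (polarPart_nonneg n k) ?_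
  · calc r * kernel n k
      _ ≤ C * (n + k + 1) ^ 2 * kernel n k := by gcongr
      _ = C * majorant n k := by rw [majorant]; ring
  · exact (polarPart_le_majorant n k).trans (by gcongr)

theorem abs_wzF_le_majorant (n k : ℕ) : |wzF n k| ≤ 78 * majorant n k := by
  refine abs_mul_kernel_sub_polarPart_le n k (by positivity) (by norm_num) (sub_nonneg.mp ?_)
  ring_nf
  positivity

theorem abs_wzG_le_majorant (n k : ℕ) : |wzG n k| ≤ 78 * majorant n k := by
  unfold wzG wzPoly
  refine abs_mul_kernel_sub_polarPart_le n k (by positivity) (by norm_num) ?_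
  rw [div_le_iff₀ (by positivity), ← sub_nonneg]
  ring_nf
  positivity

theorem tendsto_wzF (k : ℕ) : Tendsto (fun n ↦ wzF n k) atTop (𝓝 0) := by
  refine squeeze_zero_norm (fun n ↦ (abs_wzF_le_majorant n k).trans ?_)
    (summable_geometric_two.mul_left 78).tendsto_atTop_zero
  gcongr
  exact majorant_le_half_pow n k

theorem norm_wzG_le (n k : ℕ) : ‖wzG n k‖ ≤ 78 * (1 / 2) ^ n := by
  refine (abs_wzG_le_majorant n k).trans ?_
  gcongr
  exact majorant_le_half_pow n k

theorem tendsto_wzG_zero_left : Tendsto (wzG 0) atTop (𝓝 (48 / Real.pi ^ 2)) := by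
  have ratio_lim : Tendsto (fun k : ℕ ↦ (2 * (k : ℝ) + 1) / (k + 1)) atTop (𝓝 2) := by
    simpa [add_comm] using tendsto_add_mul_div_add_mul_atTop_nhds (𝕜 := ℝ) 1 1 2 one_ne_zero
  have wallis_lim := ((ratio_lim.pow 2).const_mul 3).div
    (Real.Wallis.tendsto_W_nhds_pi_div_two.pow 2) (by positivity)
  have limit_eq : 3 * 2 ^ 2 / (Real.pi / 2) ^ 2 = 48 / Real.pi ^ 2 := by
    field_simp
    norm_num
  rw [← limit_eq, funext wzG_zero_left]
  exact wallis_lim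

theorem tendsto_wzG_succ_left (n : ℕ) : Tendsto (wzG (n + 1)) atTop (𝓝 0) :=
  squeeze_zero_norm (abs_wzG_le_majorant (n + 1))
    (by simpa using (tendsto_majorant_succ_left n).const_mul 78)

theorem hasSum_wzG_zero_right : HasSum (fun n ↦ wzG n 0) (48 / Real.pi ^ 2) := by
  have wzF_lim (k : ℕ) : Tendsto (fun n ↦ wzF n k) atTop (𝓝 (wzF 0 k)) := by
    simpa only [wzF_zero_left] using tendsto_wzF k
  have wzG_lim (n : ℕ) : Tendsto (wzG n) atTop (𝓝 (if n = 0 then 48 / Real.pi ^ 2 else 0)) := by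
    cases n with
    | zero => exact tendsto_wzG_zero_left
    | succ n => exact tendsto_wzG_succ_left n
  rw [← tsum_ite_eq 0 fun _ ↦ 48 / Real.pi ^ 2]
  exact hasSum_of_wz_pair wzF_succ_sub_wzF wzF_lim (summable_geometric_two.mul_left 78)
    norm_wzG_le wzG_lim

end Guillera

theorem stmt3 :
    HasSum (fun n : ℕ =>
      poch (1/2) n ^ 3 * poch (1/3) n * poch (2/3) n / poch 1 n ^ 5 *
        (27/64 : ℝ) ^ n * (74 * (n : ℝ) ^ 2 + 27 * n + 3))
      (48 / Real.pi ^ 2) := by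
  simpa only [Guillera.wzG_zero_right, Guillera.kernel_zero_right] using
    Guillera.hasSum_wzG_zero_right
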